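/- arXiv:2203.12133 — 9 statements merged into one kernel-verified Lean document; each statement's English description precedes it below -/
import Mathlib

section
/- Fix a transition kernel P, an initial distribution z₀ ≥ 0, and opponents' joint distribution x^{-i}. Suppose player i's objective F^i : ({0,...,T} × S × A → ℝ) → ℝ is twice continuously differentiable on an open convex set containing 𝒳(P, z₀), its gradient satisfies ∂F^i/∂x(t,s,a)(x) = ℓ^i(t,s,a)(x, x^{-i}) for all (t,s,a), and its Hessian is positive definite at every point of that set. Then x̂ ∈ 𝒳(P, z₀) is the unique minimizer of F^i over 𝒳(P, z₀) if and only if x̂ satisfies the Bellman condition for the costs c(t,s,a) = ℓ^i(t,s,a)(x̂, x^{-i}) with kernel P. -/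
open Finset

/-- The feasible set 𝒳(P, z₀) of state-action distributions. -/
def Feas {S A : Type*} [Fintype S] [Fintype A] (T : ℕ)
    (P : Fin (T+1) → S → S → A → ℝ) (z0 : S → ℝ) :
    Set (Fin (T+1) → S → A → ℝ) :=
  {x | (∀ t s a, 0 ≤ x t s a) ∧
    (∀ s, ∑ a, x 0 s a = z0 s) ∧
    ∀ (t : ℕ) (ht : t < T), ∀ s,
      ∑ s', ∑ a, P ⟨t+1, by omega⟩ s s' a * x ⟨t, by omega⟩ s' a
        = ∑ a, x ⟨t+1, by omega⟩ s a}

/-- `P` is a transition kernel: nonnegative, and column-stochastic for t ∈ {1,…,T}. -/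
def IsKernel {S A : Type*} [Fintype S] (T : ℕ)
    (P : Fin (T+1) → S → S → A → ℝ) : Prop :=
  (∀ t s' s a, 0 ≤ P t s' s a) ∧
    ∀ t : Fin (T+1), t ≠ 0 → ∀ s a, ∑ s', P t s' s a = 1

/-- Backwards recursion for Q-values: `Qaux T P c k` is the Q-value at time T - k. -/
noncomputable def Qaux {S A : Type*} [Fintype S] [Fintype A] [Nonempty A] (T : ℕ)
    (P : Fin (T+1) → S → S → A → ℝ) (c : Fin (T+1) → S → A → ℝ) : ℕ → S → A → ℝ
  | 0, s, a => c (Fin.last T) s a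
  | k+1, s, a =>
    c ⟨T - (k+1), by omega⟩ s a +
      ∑ s', P ⟨T - k, by omega⟩ s' s a *
        Finset.univ.inf' Finset.univ_nonempty (Qaux T P c k s')

/-- Q-values: `Q(T,s,a) = c(T,s,a)`,
`Q(t-1,s,a) = c(t-1,s,a) + ∑_{s'} P(t,s',s,a) · min_{a'} Q(t,s',a')`. -/
noncomputable def Qval {S A : Type*} [Fintype S] [Fintype A] [Nonempty A] (T : ℕ)
    (P : Fin (T+1) → S → S → A → ℝ) (c : Fin (T+1) → S → A → ℝ)
    (t : Fin (T+1)) : S → A → ℝ :=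
  Qaux T P c (T - t.1)

/-- x satisfies the Bellman condition for costs c:
every state-action pair played with positive probability achieves the minimal Q-value. -/
def BellmanCond {S A : Type*} [Fintype S] [Fintype A] [Nonempty A] (T : ℕ)
    (P : Fin (T+1) → S → S → A → ℝ) (c : Fin (T+1) → S → A → ℝ)
    (x : Fin (T+1) → S → A → ℝ) : Prop :=
  ∀ t s a, 0 < x t s a →
    Qval T P c t s a = Finset.univ.inf' Finset.univ_nonempty (Qval T P c t s)

/-- Standard basis vector of the space of state-action functions. -/
def eb {S A : Type*} [DecidableEq S] [DecidableEq A] (T : ℕ)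
    (t : Fin (T+1)) (s : S) (a : A) : Fin (T+1) → S → A → ℝ :=
  fun t' s' a' => if t' = t ∧ s' = s ∧ a' = a then 1 else 0

/-- Standard basis vector of the joint (N-player) space. -/
def ebN {S A : Type*} [DecidableEq S] [DecidableEq A] (N T : ℕ)
    (i : Fin N) (t : Fin (T+1)) (s : S) (a : A) :
    Fin N → Fin (T+1) → S → A → ℝ :=
  fun j => if j = i then eb T t s a else 0

section helpers

variable {S A : Type*} [Fintype S] [Fintype A] {T : ℕ}

/-- The value function. -/
noncomputable def Vaux [Nonempty A] (P : Fin (T+1) → S → S → A → ℝ)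
    (c : Fin (T+1) → S → A → ℝ) (t : Fin (T+1)) (s : S) : ℝ :=
  Finset.univ.inf' Finset.univ_nonempty (Qval T P c t s)

lemma Qval_last [Nonempty A] (P : Fin (T+1) → S → S → A → ℝ)
    (c : Fin (T+1) → S → A → ℝ) (s : S) (a : A) :
    Qval T P c (Fin.last T) s a = c (Fin.last T) s a := by
  simp [Qval, Qaux]

lemma Qval_castSucc [Nonempty A] (P : Fin (T+1) → S → S → A → ℝ)
    (c : Fin (T+1) → S → A → ℝ) (i : Fin T) (s : S) (a : A) :
    Qval T P c i.castSucc s a = c i.castSucc s a +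
      ∑ s', P i.succ s' s a * Vaux P c i.succ s' := by
  obtain ⟨i, hi⟩ := i
  obtain ⟨k, hk⟩ : ∃ k, T = i + 1 + k := ⟨T - (i+1), by omega⟩
  have h1 : T - i = k + 1 := by omega
  have h2 : T - (i + 1) = k := by omega
  have h3 : T - (k + 1) = i := by omega
  have h4 : T - k = i + 1 := by omega
  simp only [Qval, Vaux, Fin.castSucc_mk, Fin.succ_mk, h1, h2, Qaux, h3, h4]

lemma feas_iff (P : Fin (T+1) → S → S → A → ℝ) (z0 : S → ℝ)
    (x : Fin (T+1) → S → A → ℝ) :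
    x ∈ Feas T P z0 ↔ (∀ t s a, 0 ≤ x t s a) ∧ (∀ s, ∑ a, x 0 s a = z0 s) ∧
      ∀ (i : Fin T) s, ∑ s', ∑ a, P i.succ s s' a * x i.castSucc s' a
        = ∑ a, x i.succ s a := by
  constructor
  · rintro ⟨h1, h2, h3⟩
    exact ⟨h1, h2, fun i s => h3 i.1 i.2 s⟩
  · rintro ⟨h1, h2, h3⟩
    exact ⟨h1, h2, fun t ht s => h3 ⟨t, ht⟩ s⟩

lemma feas_convex (P : Fin (T+1) → S → S → A → ℝ) (z0 : S → ℝ) :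
    Convex ℝ (Feas T P z0) := by
  intro x hx y hy a b ha hb hab
  rw [feas_iff] at hx hy ⊢
  obtain ⟨h1, h2, h3⟩ := hx
  obtain ⟨k1, k2, k3⟩ := hy
  refine ⟨fun t s u => ?_, fun s => ?_, fun i s => ?_⟩
  · have := h1 t s u
    have := k1 t s u
    simp only [Pi.add_apply, Pi.smul_apply, smul_eq_mul]
    positivity
  · simp only [Pi.add_apply, Pi.smul_apply, smul_eq_mul, Finset.sum_add_distrib,
      ← Finset.mul_sum, h2, k2]
    rw [← add_mul, hab, one_mul]
  · simp only [Pi.add_apply, Pi.smul_apply, smul_eq_mul, Finset.sum_add_distrib,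
      ← Finset.mul_sum, ← h3, ← k3, mul_add, mul_left_comm _ a, mul_left_comm _ b]

lemma value_identity [Nonempty A] (P : Fin (T+1) → S → S → A → ℝ) (z0 : S → ℝ)
    (c x : Fin (T+1) → S → A → ℝ) (hx : x ∈ Feas T P z0) :
    ∑ t, ∑ s, ∑ a, (Qval T P c t s a - Vaux P c t s) * x t s a =
      (∑ t, ∑ s, ∑ a, c t s a * x t s a) - ∑ s, z0 s * Vaux P c 0 s := by
  rw [feas_iff] at hx
  obtain ⟨h1, h2, h3⟩ := hx
  set g : Fin (T+1) → ℝ := fun t => ∑ s, (∑ a, x t s a) * Vaux P c t s with hg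
  have hV : ∀ t, ∑ s, ∑ a, (Qval T P c t s a - Vaux P c t s) * x t s a =
      (∑ s, ∑ a, Qval T P c t s a * x t s a) - g t := by
    intro t
    simp only [hg, sub_mul, Finset.sum_sub_distrib, Finset.sum_mul]
    congr 1
    exact Finset.sum_congr rfl fun s _ => Finset.sum_congr rfl fun a _ => mul_comm _ _
  have hQ : ∀ i : Fin T, ∑ s, ∑ a, Qval T P c i.castSucc s a * x i.castSucc s a =
      (∑ s, ∑ a, c i.castSucc s a * x i.castSucc s a) + g i.succ := by
    intro i
    simp only [hg, ← h3, Qval_castSucc, add_mul, Finset.sum_add_distrib]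
    congr 1
    simp only [Finset.sum_mul]
    rw [Finset.sum_comm' (t' := Finset.univ) (s' := fun _ => Finset.univ) (by simp)]
    conv_rhs => rw [Finset.sum_comm]; enter [2, s]; rw [Finset.sum_comm]
    rw [Finset.sum_comm]
    refine Finset.sum_congr rfl fun s _ => Finset.sum_congr rfl fun a _ =>
      Finset.sum_congr rfl fun s' _ => by ring
  have h0 : ∑ s, z0 s * Vaux P c 0 s = g 0 := by simp only [hg, h2]
  have e1 := Fin.sum_univ_succ g
  have e2 := Fin.sum_univ_castSucc g
  rw [h0, Fin.sum_univ_castSucc, Fin.sum_univ_castSucc]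
  simp only [hV]
  simp only [hQ, Qval_last, Finset.sum_sub_distrib, Finset.sum_add_distrib]
  linarith

lemma Vaux_le [Nonempty A] (P : Fin (T+1) → S → S → A → ℝ)
    (c : Fin (T+1) → S → A → ℝ) (t : Fin (T+1)) (s : S) (a : A) :
    0 ≤ Qval T P c t s a - Vaux P c t s :=
  sub_nonneg.2 (Finset.inf'_le _ (Finset.mem_univ a))

lemma bellman_iff [Nonempty A] (P : Fin (T+1) → S → S → A → ℝ) (z0 : S → ℝ)
    (c x : Fin (T+1) → S → A → ℝ) (hx : x ∈ Feas T P z0) :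
    BellmanCond T P c x ↔
      ∑ t, ∑ s, ∑ a, c t s a * x t s a ≤ ∑ s, z0 s * Vaux P c 0 s := by
  have hid := value_identity P z0 c x hx
  have hnn : ∀ t s a, 0 ≤ (Qval T P c t s a - Vaux P c t s) * x t s a :=
    fun t s a => mul_nonneg (Vaux_le P c t s a) (hx.1 t s a)
  constructor
  · intro h
    have : ∑ t, ∑ s, ∑ a, (Qval T P c t s a - Vaux P c t s) * x t s a = 0 := by
      refine Finset.sum_eq_zero fun t _ => Finset.sum_eq_zero fun s _ =>
        Finset.sum_eq_zero fun a _ => ?_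
      rcases (hx.1 t s a).eq_or_lt with h0 | h0
      · rw [← h0, mul_zero]
      · have := h t s a h0
        rw [this, Vaux, sub_self, zero_mul]
    linarith
  · intro h t s a hpos
    have hz : ∑ t, ∑ s, ∑ a, (Qval T P c t s a - Vaux P c t s) * x t s a ≤ 0 := by
      linarith
    have l1 : (Qval T P c t s a - Vaux P c t s) * x t s a ≤
        ∑ a, (Qval T P c t s a - Vaux P c t s) * x t s a :=
      Finset.single_le_sum (f := fun a => (Qval T P c t s a - Vaux P c t s) * x t s a)
        (fun a _ => hnn t s a) (Finset.mem_univ a)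
    have l2 := Finset.single_le_sum
      (f := fun s => ∑ a, (Qval T P c t s a - Vaux P c t s) * x t s a)
      (fun s _ => Finset.sum_nonneg fun a _ => hnn t s a) (Finset.mem_univ s)
    have l3 := Finset.single_le_sum
      (f := fun t => ∑ s, ∑ a, (Qval T P c t s a - Vaux P c t s) * x t s a)
      (fun t _ => Finset.sum_nonneg fun s _ => Finset.sum_nonneg fun a _ => hnn t s a)
      (Finset.mem_univ t)
    have l4 := hnn t s a
    have : (Qval T P c t s a - Vaux P c t s) * x t s a = 0 := by
      linarith
    rcases mul_eq_zero.1 this with h' | h'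
    · exact sub_eq_zero.1 h'
    · exact absurd h' hpos.ne'

lemma lower_bound [Nonempty A] (P : Fin (T+1) → S → S → A → ℝ) (z0 : S → ℝ)
    (c x : Fin (T+1) → S → A → ℝ) (hx : x ∈ Feas T P z0) :
    ∑ s, z0 s * Vaux P c 0 s ≤ ∑ t, ∑ s, ∑ a, c t s a * x t s a := by
  have hid := value_identity P z0 c x hx
  have : 0 ≤ ∑ t, ∑ s, ∑ a, (Qval T P c t s a - Vaux P c t s) * x t s a :=
    Finset.sum_nonneg fun t _ => Finset.sum_nonneg fun s _ => Finset.sum_nonneg fun a _ =>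
      mul_nonneg (Vaux_le P c t s a) (hx.1 t s a)
  linarith

lemma exists_bellman [Nonempty A] [DecidableEq A] (P : Fin (T+1) → S → S → A → ℝ)
    (hP : IsKernel T P) (z0 : S → ℝ) (hz0 : ∀ s, 0 ≤ z0 s)
    (c : Fin (T+1) → S → A → ℝ) :
    ∃ x ∈ Feas T P z0, BellmanCond T P c x := by
  have hπ : ∀ t s, ∃ a, Finset.univ.inf' Finset.univ_nonempty (Qval T P c t s) =
      Qval T P c t s a := by
    intro t s
    obtain ⟨a, -, ha⟩ := Finset.exists_mem_eq_inf' Finset.univ_nonempty (Qval T P c t s)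
    exact ⟨a, ha⟩
  choose π hπ using hπ
  let z : Fin (T+1) → S → ℝ := fun t => Fin.induction (motive := fun _ => S → ℝ) z0
    (fun i w s => ∑ s', P i.succ s s' (π i.castSucc s') * w s') t
  have z_zero : z 0 = z0 := rfl
  have z_succ : ∀ (i : Fin T) s, z i.succ s =
      ∑ s', P i.succ s s' (π i.castSucc s') * z i.castSucc s' := by
    intro i s
    simp only [z, Fin.induction_succ]
  have z_nn : ∀ t s, 0 ≤ z t s := by
    intro t
    induction t using Fin.induction with
    | zero => exact hz0
    | succ i ih =>
      intro s
      rw [z_succ]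
      exact Finset.sum_nonneg fun s' _ => mul_nonneg (hP.1 _ _ _ _) (ih s')
  refine ⟨fun t s a => if a = π t s then z t s else 0, ?_, ?_⟩
  · rw [feas_iff]
    refine ⟨fun t s a => ?_, fun s => ?_, fun i s => ?_⟩
    · split_ifs
      exacts [z_nn t s, le_rfl]
    · simp [z_zero]
    · simp [z_succ]
  · intro t s a h
    dsimp only at h
    split_ifs at h with h'
    · rw [h', hπ]
    · exact absurd h (lt_irrefl _)

lemma clm_apply_eq [DecidableEq S] [DecidableEq A]
    (L : (Fin (T+1) → S → A → ℝ) →L[ℝ] ℝ) (v : Fin (T+1) → S → A → ℝ) :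
    L v = ∑ t, ∑ s, ∑ a, L (eb T t s a) * v t s a := by
  have hv : v = ∑ t, ∑ s, ∑ a, v t s a • eb T t s a := by
    funext t s a
    simp only [Finset.sum_apply, Pi.smul_apply, smul_eq_mul, eb]
    rw [Finset.sum_eq_single t, Finset.sum_eq_single s, Finset.sum_eq_single a]
    · simp
    · intro b _ hb; simp [hb.symm]
    · simp
    · intro b _ hb; simp [hb.symm]
    · simp
    · intro b _ hb; simp [hb.symm]
    · simp
  conv_lhs => rw [hv]
  simp only [map_sum, map_smul, smul_eq_mul, mul_comm]

end helpers

lemma strict_first_order {E : Type*} [NormedAddCommGroup E] [NormedSpace ℝ E]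
    (F : E → ℝ) (U : Set E) (hUopen : IsOpen U) (hUconv : Convex ℝ U)
    (hC2 : ContDiffOn ℝ 2 F U)
    (hhess : ∀ x ∈ U, ∀ v : E, v ≠ 0 → 0 < fderiv ℝ (fderiv ℝ F) x v v)
    (x y : E) (hx : x ∈ U) (hy : y ∈ U) (hxy : y ≠ x) :
    F x + fderiv ℝ F x (y - x) < F y := by
  set v := y - x with hv
  have hv0 : v ≠ 0 := sub_ne_zero.2 hxy
  have hmem : ∀ t ∈ Set.Icc (0:ℝ) 1, x + t • v ∈ U := fun t ht =>
    hUconv.add_smul_sub_mem hx hy ht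
  have hline : ∀ t : ℝ, HasDerivAt (fun t : ℝ => x + t • v) v t := by
    intro t
    simpa using ((hasDerivAt_id t).smul_const v).const_add x
  have hd1 : ∀ z ∈ U, DifferentiableAt ℝ F z := fun z hz =>
    ((hC2 z hz).contDiffAt (hUopen.mem_nhds hz)).differentiableAt (by norm_num)
  have hd2 : ∀ z ∈ U, DifferentiableAt ℝ (fderiv ℝ F) z := fun z hz =>
    (((hC2 z hz).contDiffAt (hUopen.mem_nhds hz)).fderiv_right (m := 1)
      (by norm_num)).differentiableAt (by norm_num)
  have h1 : ∀ t ∈ Set.Icc (0:ℝ) 1,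
      HasDerivAt (fun t : ℝ => F (x + t • v)) (fderiv ℝ F (x + t • v) v) t := fun t ht =>
    (hd1 _ (hmem t ht)).hasFDerivAt.comp_hasDerivAt t (hline t)
  have h2 : ∀ t ∈ Set.Icc (0:ℝ) 1,
      HasDerivAt (fun t : ℝ => fderiv ℝ F (x + t • v) v)
        (fderiv ℝ (fderiv ℝ F) (x + t • v) v v) t := by
    intro t ht
    have := (hd2 _ (hmem t ht)).hasFDerivAt.comp_hasDerivAt t (hline t)
    have h := this.clm_apply (hasDerivAt_const t v)
    simpa using h
  obtain ⟨ξ, hξ, e1⟩ := exists_hasDerivAt_eq_slope (fun t : ℝ => F (x + t • v)) _ zero_lt_one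
    (fun t ht => (h1 t ht).continuousAt.continuousWithinAt)
    (fun t ht => h1 t (Set.Ioo_subset_Icc_self ht))
  have hsub : Set.Icc 0 ξ ⊆ Set.Icc (0:ℝ) 1 := Set.Icc_subset_Icc_right hξ.2.le
  obtain ⟨η, hη, e2⟩ := exists_hasDerivAt_eq_slope
    (fun t : ℝ => fderiv ℝ F (x + t • v) v) _ hξ.1
    (fun t ht => (h2 t (hsub ht)).continuousAt.continuousWithinAt)
    (fun t ht => h2 t (hsub (Set.Ioo_subset_Icc_self ht)))
  have hpos := hhess _ (hmem η (hsub (Set.Ioo_subset_Icc_self hη))) v hv0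
  rw [e2] at hpos
  have h3 := (div_pos_iff_of_pos_right (by linarith [hξ.1])).1 hpos
  simp only [zero_smul, add_zero, one_smul, sub_zero, div_one] at e1 h3
  have : x + v = y := by rw [hv]; abel
  rw [this] at e1
  linarith

/-- For player i with fixed opponents x⁻ⁱ, an objective Fᵢ that is C² with
positive definite Hessian on an open convex set containing 𝒳(P,z₀), and whose gradient
is the player cost ℓⁱ(·, x⁻ⁱ): x̂ ∈ 𝒳(P,z₀) is the unique minimizer of Fᵢ over 𝒳(P,z₀)
iff x̂ satisfies the Bellman condition for c = ℓⁱ(x̂, x⁻ⁱ). -/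
theorem stmt0 {S A : Type*} [Fintype S] [Fintype A] [Nonempty S] [Nonempty A]
    [DecidableEq S] [DecidableEq A] {T : ℕ}
    (P : Fin (T+1) → S → S → A → ℝ) (hP : IsKernel T P)
    (z0 : S → ℝ) (hz0 : ∀ s, 0 ≤ z0 s)
    {Opp : Type*} (xopp : Opp)
    (ℓ : (Fin (T+1) → S → A → ℝ) → Opp → Fin (T+1) → S → A → ℝ)
    (F : (Fin (T+1) → S → A → ℝ) → ℝ)
    (U : Set (Fin (T+1) → S → A → ℝ)) (hUopen : IsOpen U) (hUconv : Convex ℝ U)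
    (hXU : Feas T P z0 ⊆ U)
    (hC2 : ContDiffOn ℝ 2 F U)
    (hgrad : ∀ x ∈ U, ∀ t s a, fderiv ℝ F x (eb T t s a) = ℓ x xopp t s a)
    (hhess : ∀ x ∈ U, ∀ v : Fin (T+1) → S → A → ℝ, v ≠ 0 →
      0 < fderiv ℝ (fderiv ℝ F) x v v)
    (xhat : Fin (T+1) → S → A → ℝ) (hxhat : xhat ∈ Feas T P z0) :
    (∀ x ∈ Feas T P z0, x ≠ xhat → F xhat < F x) ↔
      BellmanCond T P (ℓ xhat xopp) xhat := by
  set c := ℓ xhat xopp with hc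
  have hU := hXU hxhat
  have hL : ∀ v, fderiv ℝ F xhat v = ∑ t, ∑ s, ∑ a, c t s a * v t s a := by
    intro v
    rw [clm_apply_eq]
    simp only [hgrad xhat hU, hc]
  constructor
  · intro hmin
    obtain ⟨y, hy, hyB⟩ := exists_bellman P hP z0 hz0 c
    rw [bellman_iff P z0 c xhat hxhat]
    rw [bellman_iff P z0 c y hy] at hyB
    have hm : IsLocalMinOn F (Feas T P z0) xhat := by
      refine IsMinOn.localize fun x hx => ?_
      by_cases h : x = xhat
      · rw [h]; exact le_refl (F xhat)
      · exact (hmin x hx h).le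
    have hd : HasFDerivAt F (fderiv ℝ F xhat) xhat :=
      (((hC2 xhat hU).contDiffAt (hUopen.mem_nhds hU)).differentiableAt
        (by norm_num)).hasFDerivAt
    have hnn := hm.hasFDerivWithinAt_nonneg hd.hasFDerivWithinAt
      (sub_mem_posTangentConeAt_of_segment_subset
        ((feas_convex P z0).segment_subset hxhat hy))
    rw [map_sub, hL, hL] at hnn
    linarith
  · intro hB x hx hne
    rw [bellman_iff P z0 c xhat hxhat] at hB
    have h1 := strict_first_order F U hUopen hUconv hC2 hhess xhat x hU (hXU hx) hne
    have h2 := lower_bound P z0 c x hx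
    rw [map_sub, hL, hL] at h1
    linarith
end

section
/- Let c : {0,...,T} × S × A → ℝ be costs, Q the associated Q-values for kernel P, and suppose x̂ ∈ 𝒳(P, z₀) satisfies the Bellman condition for c. Define ν(t,s) := min_{a'} Q(t,s,a') and μ(t,s,a) := Q(t,s,a) − ν(t,s). Then: (i) μ(t,s,a) ≥ 0 for all t,s,a (dual feasibility); (ii) μ(t,s,a) · x̂(t,s,a) = 0 for all t,s,a (complementary slackness); (iii) the stationarity equations hold: c(t,s,a) + ∑_{s'} P(t+1,s',s,a) ν(t+1,s') = ν(t,s) + μ(t,s,a) for all t < T and all s,a, and c(T,s,a) = ν(T,s) + μ(T,s,a) for all s,a. -/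
open Finset

/-- If x̂ ∈ 𝒳(P,z₀) satisfies the Bellman condition for costs c, then the
multipliers ν(t,s) = min_{a'} Q(t,s,a') and μ(t,s,a) = Q(t,s,a) − ν(t,s) satisfy dual
feasibility, complementary slackness, and the stationarity equations. -/
theorem stmt2 {S A : Type*} [Fintype S] [Fintype A] [Nonempty S] [Nonempty A] {T : ℕ}
    (P : Fin (T+1) → S → S → A → ℝ) (hP : IsKernel T P)
    (z0 : S → ℝ) (hz0 : ∀ s, 0 ≤ z0 s)
    (c : Fin (T+1) → S → A → ℝ)
    (xhat : Fin (T+1) → S → A → ℝ) (hxhat : xhat ∈ Feas T P z0)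
    (hbell : BellmanCond T P c xhat)
    (ν : Fin (T+1) → S → ℝ) (μ : Fin (T+1) → S → A → ℝ)
    (hν : ∀ t s, ν t s = Finset.univ.inf' Finset.univ_nonempty (Qval T P c t s))
    (hμ : ∀ t s a, μ t s a = Qval T P c t s a - ν t s) :
    (∀ t s a, 0 ≤ μ t s a) ∧
    (∀ t s a, μ t s a * xhat t s a = 0) ∧
    (∀ (t : ℕ) (ht : t < T), ∀ s a,
      c ⟨t, by omega⟩ s a + ∑ s', P ⟨t+1, by omega⟩ s' s a * ν ⟨t+1, by omega⟩ s'
        = ν ⟨t, by omega⟩ s + μ ⟨t, by omega⟩ s a) ∧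
    (∀ s a, c (Fin.last T) s a = ν (Fin.last T) s + μ (Fin.last T) s a) := by
  refine ⟨?_, ?_, ?_, ?_⟩
  · intro t s a
    rw [hμ, hν, sub_nonneg]
    exact Finset.inf'_le _ (Finset.mem_univ a)
  · intro t s a
    rcases (hxhat.1 t s a).lt_or_eq with h | h
    · rw [hμ, hν, hbell t s a h, sub_self, zero_mul]
    · rw [← h, mul_zero]
  · intro t ht s a
    rw [hμ, add_sub_cancel]
    simp only [hν]
    have key : ∀ k, ∀ hk : k + 1 + t = T,
        Qval T P c ⟨t, by omega⟩ s a = Qaux T P c (k + 1) s a := by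
      intro k hk
      have : T - t = k + 1 := by omega
      simp only [Qval, this]
    obtain ⟨k, hk⟩ : ∃ k, k + 1 + t = T := ⟨T - t - 1, by omega⟩
    rw [key k hk, Qaux]
    have h1 : T - (k + 1) = t := by omega
    have h2 : T - k = t + 1 := by omega
    have h3 : T - (t + 1) = k := by omega
    simp only [Qval, h1, h2, h3]
  · intro s a
    rw [hμ, add_sub_cancel]
    simp [Qval, Qaux]
end

section
/- Let c : {0,...,T} × S × A → ℝ be costs and x̂ ∈ 𝒳(P, z₀). Suppose there exist multipliers ν : {0,...,T} × S → ℝ and μ : {0,...,T} × S × A → ℝ with μ ≥ 0, μ(t,s,a) · x̂(t,s,a) = 0 for all t,s,a, and satisfying the stationarity equations c(t,s,a) + ∑_{s'} P(t+1,s',s,a) ν(t+1,s') = ν(t,s) + μ(t,s,a) for all t < T and c(T,s,a) = ν(T,s) + μ(T,s,a). Then x̂ satisfies the Bellman condition for c: for all t,s,a, x̂(t,s,a) > 0 implies Q(t,s,a) = min_{a'} Q(t,s,a'), where Q are the Q-values of c with kernel P. -/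
open Finset

theorem kkt_key {S A : Type*} [Fintype S] [Fintype A] [Nonempty A] {T : ℕ}
    (P : Fin (T+1) → S → S → A → ℝ) (hP : IsKernel T P)
    (z0 : S → ℝ)
    (c : Fin (T+1) → S → A → ℝ)
    (xhat : Fin (T+1) → S → A → ℝ) (hxhat : xhat ∈ Feas T P z0)
    (ν : Fin (T+1) → S → ℝ) (μ : Fin (T+1) → S → A → ℝ)
    (hμnonneg : ∀ t s a, 0 ≤ μ t s a)
    (hcs : ∀ t s a, μ t s a * xhat t s a = 0)
    (hstat : ∀ (t : ℕ) (ht : t < T), ∀ s a,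
      c ⟨t, by omega⟩ s a + ∑ s', P ⟨t+1, by omega⟩ s' s a * ν ⟨t+1, by omega⟩ s'
        = ν ⟨t, by omega⟩ s + μ ⟨t, by omega⟩ s a)
    (hstatT : ∀ s a, c (Fin.last T) s a = ν (Fin.last T) s + μ (Fin.last T) s a)
    (k : ℕ) : ∀ (t : ℕ) (ht : t + k = T),
      (∀ s a, ν ⟨t, by omega⟩ s ≤ Qaux T P c k s a) ∧
      (∀ s a, 0 < xhat ⟨t, by omega⟩ s a → Qaux T P c k s a = ν ⟨t, by omega⟩ s) := by
  have hμ0 : ∀ t s a, 0 < xhat t s a → μ t s a = 0 := fun t s a h =>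
    (mul_eq_zero.mp (hcs t s a)).resolve_right h.ne'
  obtain ⟨hx0, -, hflow⟩ := hxhat
  induction k with
  | zero =>
    intro t ht
    obtain rfl : t = T := by omega
    refine ⟨fun s a => ?_, fun s a h => ?_⟩
    · have h1 := hstatT s a
      have h2 := hμnonneg (Fin.last t) s a
      change ν (Fin.last t) s ≤ c (Fin.last t) s a
      linarith
    · have h1 := hstatT s a
      have h2 := hμ0 (Fin.last t) s a h
      change c (Fin.last t) s a = ν (Fin.last t) s
      linarith
  | succ k ih =>
    intro t ht
    obtain ⟨ih1, ih2⟩ := ih (t+1) (by omega)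
    have hQ : ∀ s a, Qaux T P c (k+1) s a = c ⟨t, by omega⟩ s a +
        ∑ s', P ⟨t+1, by omega⟩ s' s a *
          Finset.univ.inf' Finset.univ_nonempty (Qaux T P c k s') := by
      intro s a
      have e1 : (⟨T - (k+1), by omega⟩ : Fin (T+1)) = ⟨t, by omega⟩ := Fin.ext (by simp; omega)
      have e2 : (⟨T - k, by omega⟩ : Fin (T+1)) = ⟨t+1, by omega⟩ := Fin.ext (by simp; omega)
      rw [Qaux, e1, e2]
    have hV : ∀ s', ν ⟨t+1, by omega⟩ s' ≤
        Finset.univ.inf' Finset.univ_nonempty (Qaux T P c k s') := fun s' =>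
      Finset.le_inf' _ _ fun a _ => ih1 s' a
    refine ⟨fun s a => ?_, fun s a h => ?_⟩
    · have h1 := hstat t (by omega) s a
      have h2 := hμnonneg ⟨t, by omega⟩ s a
      have h3 : ∑ s', P ⟨t+1, by omega⟩ s' s a * ν ⟨t+1, by omega⟩ s' ≤
          ∑ s', P ⟨t+1, by omega⟩ s' s a *
          Finset.univ.inf' Finset.univ_nonempty (Qaux T P c k s') :=
        Finset.sum_le_sum fun s' _ => mul_le_mul_of_nonneg_left (hV s') (hP.1 _ _ _ _)
      rw [hQ]
      linarith
    · have h1 := hstat t (by omega) s a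
      have h2 := hμ0 ⟨t, by omega⟩ s a h
      have h3 : ∑ s', P ⟨t+1, by omega⟩ s' s a * ν ⟨t+1, by omega⟩ s' =
          ∑ s', P ⟨t+1, by omega⟩ s' s a *
          Finset.univ.inf' Finset.univ_nonempty (Qaux T P c k s') := by
        refine Finset.sum_congr rfl fun s' _ => ?_
        rcases (hP.1 ⟨t+1, by omega⟩ s' s a).eq_or_lt with h0 | hpos
        · rw [← h0]; simp
        · have hm : 0 < ∑ a', xhat ⟨t+1, by omega⟩ s' a' := by
            rw [← hflow t (by omega) s']
            have hn : ∀ u b, 0 ≤ P ⟨t+1, by omega⟩ s' u b * xhat ⟨t, by omega⟩ u b :=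
              fun u b => mul_nonneg (hP.1 _ _ _ _) (hx0 _ _ _)
            exact Finset.sum_pos' (fun u _ => Finset.sum_nonneg fun b _ => hn u b)
              ⟨s, Finset.mem_univ _, Finset.sum_pos' (fun b _ => hn s b)
                ⟨a, Finset.mem_univ _, mul_pos hpos h⟩⟩
          obtain ⟨a', -, ha'⟩ := Finset.exists_lt_of_sum_lt
            (s := Finset.univ) (f := fun _ : A => (0:ℝ)) (by simpa using hm)
          congr 1
          refine le_antisymm (hV s') ?_
          rw [← ih2 s' a' ha']
          exact Finset.inf'_le _ (Finset.mem_univ a')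
      rw [hQ, ← h3]
      linarith

/-- If x̂ ∈ 𝒳(P,z₀) admits KKT multipliers ν, μ with μ ≥ 0, complementary
slackness, and the stationarity equations for costs c, then x̂ satisfies the Bellman
condition for c. -/
theorem stmt3 {S A : Type*} [Fintype S] [Fintype A] [Nonempty S] [Nonempty A] {T : ℕ}
    (P : Fin (T+1) → S → S → A → ℝ) (hP : IsKernel T P)
    (z0 : S → ℝ) (hz0 : ∀ s, 0 ≤ z0 s)
    (c : Fin (T+1) → S → A → ℝ)
    (xhat : Fin (T+1) → S → A → ℝ) (hxhat : xhat ∈ Feas T P z0)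
    (ν : Fin (T+1) → S → ℝ) (μ : Fin (T+1) → S → A → ℝ)
    (hμnonneg : ∀ t s a, 0 ≤ μ t s a)
    (hcs : ∀ t s a, μ t s a * xhat t s a = 0)
    (hstat : ∀ (t : ℕ) (ht : t < T), ∀ s a,
      c ⟨t, by omega⟩ s a + ∑ s', P ⟨t+1, by omega⟩ s' s a * ν ⟨t+1, by omega⟩ s'
        = ν ⟨t, by omega⟩ s + μ ⟨t, by omega⟩ s a)
    (hstatT : ∀ s a, c (Fin.last T) s a = ν (Fin.last T) s + μ (Fin.last T) s a) :
    BellmanCond T P c xhat := by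
  intro t s a h
  obtain ⟨h1, h2⟩ := kkt_key P hP z0 c xhat hxhat ν μ hμnonneg hcs hstat hstatT
    (T - t.1) t.1 (by omega)
  unfold Qval
  refine le_antisymm (Finset.le_inf' _ _ fun a' _ => ?_) (Finset.inf'_le _ (Finset.mem_univ a))
  rw [h2 s a h]
  exact h1 s a'
end

section
/- Let C₁ ⊆ ℝ^{n₁}, ..., C_N ⊆ ℝ^{n_N} be convex sets, C = C₁ × ⋯ × C_N, and let F : ℝ^{n₁ + ⋯ + n_N} → ℝ be convex and differentiable. Suppose x̂ = (x̂^1,...,x̂^N) ∈ C is coordinatewise (blockwise) optimal: for every i and every y ∈ C_i, F(x̂^1,...,x̂^{i-1}, y, x̂^{i+1},...,x̂^N) ≥ F(x̂). Then x̂ is a global minimizer of F over C: F(x) ≥ F(x̂) for all x ∈ C. -/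
/-- For convex sets C₁,…,C_N and a convex differentiable F on the product
space, blockwise (coordinatewise) optimality of x̂ over the Cᵢ implies that x̂ is a
global minimizer of F over C₁ × ⋯ × C_N. -/
theorem stmt6 {N : ℕ} (n : Fin N → ℕ)
    (C : ∀ i, Set (Fin (n i) → ℝ)) (hC : ∀ i, Convex ℝ (C i))
    (F : (∀ i, Fin (n i) → ℝ) → ℝ)
    (hFconv : ConvexOn ℝ Set.univ F) (hFdiff : Differentiable ℝ F)
    (xhat : ∀ i, Fin (n i) → ℝ) (hxhat : ∀ i, xhat i ∈ C i)
    (hblock : ∀ i, ∀ y ∈ C i, F xhat ≤ F (Function.update xhat i y)) :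
    ∀ x : ∀ i, Fin (n i) → ℝ, (∀ i, x i ∈ C i) → F xhat ≤ F x := by
  intro x hx
  have key : ∀ v, Filter.Tendsto (fun t : ℝ => t⁻¹ • (F (xhat + t • v) - F xhat))
      (nhdsWithin 0 (Set.Ioi 0)) (nhds (fderiv ℝ F xhat v)) := fun v =>
    ((hFdiff xhat).hasFDerivAt.hasLineDerivAt v).tendsto_slope_zero_right
  have hev : ∀ᶠ t : ℝ in nhdsWithin 0 (Set.Ioi 0), t ∈ Set.Ioo (0 : ℝ) 1 :=
    Ioo_mem_nhdsGT one_pos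
  have h1 : ∀ i, 0 ≤ fderiv ℝ F xhat (Pi.single i (x i - xhat i)) := by
    intro i
    refine ge_of_tendsto (key _) ?_
    filter_upwards [hev] with t ht
    have hmem : xhat i + t • (x i - xhat i) ∈ C i :=
      (hC i).add_smul_sub_mem (hxhat i) (hx i) ⟨ht.1.le, ht.2.le⟩
    have heq : xhat + t • (Pi.single i (x i - xhat i) : ∀ i, Fin (n i) → ℝ)
        = Function.update xhat i (xhat i + t • (x i - xhat i)) := by
      funext j
      by_cases h : j = i
      · subst h; simp
      · simp [h]
    rw [heq, smul_eq_mul]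
    exact mul_nonneg (inv_nonneg.2 ht.1.le) (sub_nonneg.2 (hblock i _ hmem))
  have h2 : 0 ≤ fderiv ℝ F xhat (x - xhat) := by
    have : x - xhat = ∑ i, (Pi.single i (x i - xhat i) : ∀ i, Fin (n i) → ℝ) :=
      (Finset.univ_sum_single (x - xhat)).symm
    rw [this, map_sum]
    exact Finset.sum_nonneg fun i _ => h1 i
  have h3 : fderiv ℝ F xhat (x - xhat) ≤ F x - F xhat := by
    refine le_of_tendsto (key _) ?_
    filter_upwards [hev] with t ht
    have hc := hFconv.2 (Set.mem_univ xhat) (Set.mem_univ x)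
      (sub_nonneg.2 ht.2.le) ht.1.le (by ring)
    have heq : xhat + t • (x - xhat) = (1 - t) • xhat + t • x := by module
    rw [heq, smul_eq_mul, inv_mul_le_iff₀ ht.1]
    simp only [smul_eq_mul] at hc
    linarith
  linarith
end

section
/- Let the player costs have the congestion form ℓ^i(t,s,a)(x) = α_i · f_{t,s}(∑_{a'} y(t,s,a')) + α_i · g_{t,s,a}(y(t,s,a)) + h^i_{t,s,a}(x^i(t,s,a)), where y = ∑_{j=1}^N α_j x^j with α_j > 0 for all j, and where each f_{t,s} : ℝ → ℝ and g_{t,s,a} : ℝ → ℝ is differentiable with everywhere nonnegative derivative and each h^i_{t,s,a} : ℝ → ℝ is differentiable with everywhere strictly positive derivative. Then at every point x ∈ ℝ^{N(T+1)|S||A|}, the Jacobian Dξ(x) of the stacked cost vector ξ is symmetric and positive definite: vᵀ Dξ(x) v > 0 for every nonzero v. -/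
open Finset

theorem stmt8_lin1 {S A : Type*} [Fintype A] [DecidableEq S] [DecidableEq A] {T N : ℕ}
    (α : Fin N → ℝ) (j : Fin N) (t' : Fin (T+1)) (s' : S) (a' : A)
    (t : Fin (T+1)) (s : S) (a : A) :
    ∑ k, α k * ebN N T j t' s' a' k t s a = if t = t' ∧ s = s' ∧ a = a' then α j else 0 := by
  rw [Finset.sum_eq_single j]
  · simp [ebN, eb]
  · intro b _ hb
    simp [ebN, hb]
  · simp

theorem stmt8_lin2 {S A : Type*} [Fintype A] [DecidableEq S] [DecidableEq A] {T N : ℕ}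
    (α : Fin N → ℝ) (j : Fin N) (t' : Fin (T+1)) (s' : S) (a' : A)
    (t : Fin (T+1)) (s : S) :
    ∑ b, ∑ k, α k * ebN N T j t' s' a' k t s b = if t = t' ∧ s = s' then α j else 0 := by
  simp only [stmt8_lin1]
  by_cases h : t = t' ∧ s = s'
  · simp [h]
  · rw [if_neg h]
    apply Finset.sum_eq_zero
    intro b _
    rw [if_neg]
    tauto

/-- For congestion-form player costs
ℓⁱ(t,s,a)(x) = αᵢ f_{t,s}(∑_{a'} y(t,s,a')) + αᵢ g_{t,s,a}(y(t,s,a)) + hⁱ_{t,s,a}(xⁱ(t,s,a))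
with y = ∑ⱼ αⱼ xʲ, αⱼ > 0, f and g differentiable with nonnegative derivative, and h
differentiable with strictly positive derivative, the Jacobian of the stacked cost vector
ξ is symmetric and positive definite at every point. -/
theorem stmt8 {S A : Type*} [Fintype S] [Fintype A] [Nonempty S] [Nonempty A]
    [DecidableEq S] [DecidableEq A] {T N : ℕ}
    (α : Fin N → ℝ) (hα : ∀ j, 0 < α j)
    (f : Fin (T+1) → S → ℝ → ℝ) (g : Fin (T+1) → S → A → ℝ → ℝ)
    (h : Fin N → Fin (T+1) → S → A → ℝ → ℝ)
    (hf : ∀ t s, Differentiable ℝ (f t s)) (hf' : ∀ t s u, 0 ≤ deriv (f t s) u)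
    (hg : ∀ t s a, Differentiable ℝ (g t s a)) (hg' : ∀ t s a u, 0 ≤ deriv (g t s a) u)
    (hh : ∀ i t s a, Differentiable ℝ (h i t s a)) (hh' : ∀ i t s a u, 0 < deriv (h i t s a) u)
    (ξ : (Fin N → Fin (T+1) → S → A → ℝ) → (Fin N → Fin (T+1) → S → A → ℝ))
    (hξ : ∀ x i t s a, ξ x i t s a =
      α i * f t s (∑ a', ∑ j, α j * x j t s a')
        + α i * g t s a (∑ j, α j * x j t s a)
        + h i t s a (x i t s a)) :
    ∀ x : Fin N → Fin (T+1) → S → A → ℝ,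
      (∀ i t s a j t' s' a',
        fderiv ℝ ξ x (ebN N T j t' s' a') i t s a
          = fderiv ℝ ξ x (ebN N T i t s a) j t' s' a') ∧
      ∀ v : Fin N → Fin (T+1) → S → A → ℝ, v ≠ 0 →
        0 < ∑ i, ∑ t, ∑ s, ∑ a, v i t s a * fderiv ℝ ξ x v i t s a := by
  intro x
  have hdiff : DifferentiableAt ℝ ξ x := by
    refine differentiableAt_pi.2 fun i => differentiableAt_pi.2 fun t =>
      differentiableAt_pi.2 fun s => differentiableAt_pi.2 fun a => ?_
    simp only [hξ]
    have h1 : DifferentiableAt ℝ (fun x : Fin N → Fin (T+1) → S → A → ℝ =>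
        ∑ a', ∑ j, α j * x j t s a') x := by fun_prop
    have h2 : DifferentiableAt ℝ (fun x : Fin N → Fin (T+1) → S → A → ℝ =>
        ∑ j, α j * x j t s a) x := by fun_prop
    have h3 : DifferentiableAt ℝ (fun x : Fin N → Fin (T+1) → S → A → ℝ =>
        x i t s a) x := by fun_prop
    exact ((((hf t s _).comp x h1).const_mul (α i)).add
      (((hg t s a _).comp x h2).const_mul (α i))).add ((hh i t s a _).comp x h3)
  have key : ∀ v i t s a, fderiv ℝ ξ x v i t s a =
      α i * (deriv (f t s) (∑ a', ∑ j, α j * x j t s a') * ∑ a', ∑ j, α j * v j t s a')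
      + α i * (deriv (g t s a) (∑ j, α j * x j t s a) * ∑ j, α j * v j t s a)
      + deriv (h i t s a) (x i t s a) * v i t s a := by
    intro v i t s a
    have hline : ∀ j b, HasDerivAt (fun r : ℝ => (x + r • v) j t s b) (v j t s b) 0 := by
      intro j b
      simpa using ((hasDerivAt_id (0:ℝ)).mul_const (v j t s b)).const_add (x j t s b)
    have hL : HasDerivAt (fun r : ℝ => ξ (x + r • v)) (fderiv ℝ ξ x v) 0 := by
      have := hdiff.hasFDerivAt.hasLineDerivAt v
      exact this
    have hL' := hasDerivAt_pi.1 (hasDerivAt_pi.1 (hasDerivAt_pi.1 (hasDerivAt_pi.1 hL i) t) s) a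
    have e2 : ∀ b, HasDerivAt (fun r : ℝ => ∑ j, α j * (x + r • v) j t s b)
        (∑ j, α j * v j t s b) 0 := fun b =>
      HasDerivAt.fun_sum fun j _ => (hline j b).const_mul (α j)
    have e1 : HasDerivAt (fun r : ℝ => ∑ b, ∑ j, α j * (x + r • v) j t s b)
        (∑ b, ∑ j, α j * v j t s b) 0 := HasDerivAt.fun_sum fun b _ => e2 b
    have x0 : x + (0:ℝ) • v = x := by simp
    have d1 := (hf t s (∑ b, ∑ j, α j * (x + (0:ℝ) • v) j t s b)).hasDerivAt.comp (0:ℝ) e1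
    have d2 := (hg t s a (∑ j, α j * (x + (0:ℝ) • v) j t s a)).hasDerivAt.comp (0:ℝ) (e2 a)
    have d3 := (hh i t s a ((x + (0:ℝ) • v) i t s a)).hasDerivAt.comp (0:ℝ) (hline i a)
    rw [x0] at d1 d2 d3
    have d := ((d1.const_mul (α i)).add (d2.const_mul (α i))).add d3
    refine hL'.unique ?_
    simp only [hξ]
    exact d
  refine ⟨?_, ?_⟩
  · intro i t s a j t' s' a'
    rw [key, key]
    simp only [stmt8_lin1, stmt8_lin2]
    by_cases ht : t = t'
    swap
    · have ht2 : ¬ t' = t := fun e => ht e.symm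
      simp [ht, ht2, ebN, eb, ite_apply]
    by_cases hs : s = s'
    swap
    · have ht2 : ¬ s' = s := fun e => hs e.symm
      simp [hs, ht2, ebN, eb, ite_apply]
    subst ht hs
    by_cases ha : a = a'
    · subst ha
      by_cases hi : i = j
      · subst hi; rfl
      · have hi2 : ¬ j = i := fun e => hi e.symm
        simp [hi, hi2, ebN]
        ring
    · have ha2 : ¬ a' = a := fun e => ha e.symm
      simp [ha, ha2, ebN, eb, ite_apply]
      ring
  · intro v hv
    have hre : ∑ i, ∑ t, ∑ s, ∑ a, v i t s a * fderiv ℝ ξ x v i t s a =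
        ∑ t, ∑ s, deriv (f t s) (∑ a', ∑ j, α j * x j t s a') * (∑ a', ∑ j, α j * v j t s a') ^ 2
        + ∑ t, ∑ s, ∑ a, deriv (g t s a) (∑ j, α j * x j t s a) * (∑ j, α j * v j t s a) ^ 2
        + ∑ i, ∑ t, ∑ s, ∑ a, deriv (h i t s a) (x i t s a) * v i t s a ^ 2 := by
      have c : ∀ F : Fin N → Fin (T+1) → S → A → ℝ,
          ∑ i, ∑ t, ∑ s, ∑ a, F i t s a = ∑ t, ∑ s, ∑ a, ∑ i, F i t s a := by
        intro F
        rw [Finset.sum_comm]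
        refine Finset.sum_congr rfl fun t _ => ?_
        rw [Finset.sum_comm]
        refine Finset.sum_congr rfl fun s _ => ?_
        rw [Finset.sum_comm]
      rw [c, c, ← Finset.sum_add_distrib, ← Finset.sum_add_distrib]
      refine Finset.sum_congr rfl fun t _ => ?_
      rw [← Finset.sum_add_distrib, ← Finset.sum_add_distrib]
      refine Finset.sum_congr rfl fun s _ => ?_
      rw [pow_two, ← mul_assoc, Finset.mul_sum (Finset.univ : Finset A) _
          (deriv (f t s) (∑ a', ∑ j, α j * x j t s a') * (∑ a', ∑ j, α j * v j t s a')),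
        ← Finset.sum_add_distrib, ← Finset.sum_add_distrib]
      refine Finset.sum_congr rfl fun a _ => ?_
      rw [pow_two (∑ j, α j * v j t s a), ← mul_assoc,
        Finset.mul_sum (Finset.univ : Finset (Fin N)) _
          (deriv (f t s) (∑ a', ∑ j, α j * x j t s a') * (∑ a', ∑ j, α j * v j t s a')),
        Finset.mul_sum (Finset.univ : Finset (Fin N)) _
          (deriv (g t s a) (∑ j, α j * x j t s a) * (∑ j, α j * v j t s a)),
        ← Finset.sum_add_distrib, ← Finset.sum_add_distrib]
      refine Finset.sum_congr rfl fun i _ => ?_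
      rw [key]
      ring
    rw [hre]
    have p1 : 0 ≤ ∑ t, ∑ s, deriv (f t s) (∑ a', ∑ j, α j * x j t s a') *
        (∑ a', ∑ j, α j * v j t s a') ^ 2 :=
      Finset.sum_nonneg fun t _ => Finset.sum_nonneg fun s _ =>
        mul_nonneg (hf' t s _) (sq_nonneg _)
    have p2 : 0 ≤ ∑ t, ∑ s, ∑ a, deriv (g t s a) (∑ j, α j * x j t s a) *
        (∑ j, α j * v j t s a) ^ 2 :=
      Finset.sum_nonneg fun t _ => Finset.sum_nonneg fun s _ => Finset.sum_nonneg fun a _ =>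
        mul_nonneg (hg' t s a _) (sq_nonneg _)
    have q : ∀ i t s a, 0 ≤ deriv (h i t s a) (x i t s a) * v i t s a ^ 2 := fun i t s a =>
      mul_nonneg (hh' i t s a _).le (sq_nonneg _)
    have p3 : 0 < ∑ i, ∑ t, ∑ s, ∑ a, deriv (h i t s a) (x i t s a) * v i t s a ^ 2 := by
      obtain ⟨i, hi⟩ := Function.ne_iff.1 hv
      obtain ⟨t, ht⟩ := Function.ne_iff.1 hi
      obtain ⟨s, hs⟩ := Function.ne_iff.1 ht
      obtain ⟨a, ha⟩ := Function.ne_iff.1 hs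
      have ha' : v i t s a ≠ 0 := ha
      refine Finset.sum_pos' (fun i _ => Finset.sum_nonneg fun t _ => Finset.sum_nonneg fun s _ =>
        Finset.sum_nonneg fun a _ => q i t s a) ⟨i, Finset.mem_univ _, ?_⟩
      refine Finset.sum_pos' (fun t _ => Finset.sum_nonneg fun s _ =>
        Finset.sum_nonneg fun a _ => q i t s a) ⟨t, Finset.mem_univ _, ?_⟩
      refine Finset.sum_pos' (fun s _ =>
        Finset.sum_nonneg fun a _ => q i t s a) ⟨s, Finset.mem_univ _, ?_⟩
      refine Finset.sum_pos' (fun a _ => q i t s a) ⟨a, Finset.mem_univ _, ?_⟩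
      exact mul_pos (hh' i t s a _) (by positivity)
    linarith
end

section
/- Let D ⊆ ℝⁿ be a nonempty compact convex set and F : ℝⁿ → ℝ a differentiable convex function that is α-strongly convex on D for some α > 0, with minimizer x̂ of F over D. Define the curvature constant C_F := sup { (2/γ²)(F(w) − F(x) − ⟨∇F(x), w − x⟩) : x, s ∈ D, γ ∈ (0,1], w = x + γ(s − x) }, assumed finite. Let (x^k) be Frank–Wolfe iterates: x⁰ ∈ D and x^{k+1} = (1 − γ_k) x^k + γ_k b^k where γ_k = 2/(k+2) and b^k ∈ argmin_{b ∈ D} ⟨∇F(x^k), b⟩. Then for every k ≥ 1, (α/2)‖x^k − x̂‖² ≤ 2 C_F/(k+2). -/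
open RealInnerProductSpace

/-- The set whose supremum defines the curvature constant C_F of F over D. -/
noncomputable def curvSet {n : ℕ} (D : Set (EuclideanSpace ℝ (Fin n)))
    (F : EuclideanSpace ℝ (Fin n) → ℝ) : Set ℝ :=
  {r | ∃ x ∈ D, ∃ s ∈ D, ∃ γ : ℝ, 0 < γ ∧ γ ≤ 1 ∧
    r = 2 / γ ^ 2 *
      (F (x + γ • (s - x)) - F x - ⟪gradient F x, γ • (s - x)⟫)}

theorem grad_ineq_aux {n : ℕ} (F : EuclideanSpace ℝ (Fin n) → ℝ)
    (hFdiff : Differentiable ℝ F) (hFconv : ConvexOn ℝ Set.univ F)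
    (x y : EuclideanSpace ℝ (Fin n)) :
    F x + ⟪gradient F x, y - x⟫ ≤ F y := by
  have h1 : HasDerivAt (fun t : ℝ => F (AffineMap.lineMap x y t)) (⟪gradient F x, y - x⟫) 0 := by
    have hF : HasFDerivAt F (InnerProductSpace.toDual ℝ _ (gradient F x))
        (AffineMap.lineMap x y (0:ℝ)) := by
      have := (hFdiff x).hasGradientAt.hasFDerivAt
      simpa using this
    have := hF.comp_hasDerivAt (0:ℝ) (AffineMap.hasDerivAt_lineMap (a := x) (b := y))
    exact this
  have h2 : ConvexOn ℝ Set.univ (fun t : ℝ => F (AffineMap.lineMap x y t)) := by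
    have := hFconv.comp_affineMap (AffineMap.lineMap (k := ℝ) x y)
    simpa [Function.comp_def] using this
  have h3 := h2.le_slope_of_hasDerivAt (Set.mem_univ 0) (Set.mem_univ 1) one_pos h1
  rw [slope_def_field] at h3
  simp only [AffineMap.lineMap_apply_one, AffineMap.lineMap_apply_zero, sub_zero, div_one] at h3
  linarith

/-- For a differentiable convex F that is α-strongly convex on a nonempty
compact convex D, with minimizer x̂ over D and finite curvature constant C_F, the
Frank–Wolfe iterates with step size γ_k = 2/(k+2) satisfy
(α/2)‖xᵏ − x̂‖² ≤ 2 C_F/(k+2) for all k ≥ 1. -/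
theorem stmt9 {n : ℕ} (D : Set (EuclideanSpace ℝ (Fin n)))
    (hDne : D.Nonempty) (hDcomp : IsCompact D) (hDconv : Convex ℝ D)
    (F : EuclideanSpace ℝ (Fin n) → ℝ)
    (hFdiff : Differentiable ℝ F) (hFconv : ConvexOn ℝ Set.univ F)
    (α : ℝ) (hαpos : 0 < α)
    (hsc : ∀ x ∈ D, ∀ y ∈ D, ∀ l : ℝ, 0 ≤ l → l ≤ 1 →
      F (l • x + (1 - l) • y)
        ≤ l * F x + (1 - l) * F y - α / 2 * l * (1 - l) * ‖x - y‖ ^ 2)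
    (xhat : EuclideanSpace ℝ (Fin n)) (hxhatD : xhat ∈ D)
    (hxhatmin : ∀ y ∈ D, F xhat ≤ F y)
    (hbdd : BddAbove (curvSet D F))
    (x b : ℕ → EuclideanSpace ℝ (Fin n)) (hx0 : x 0 ∈ D)
    (hbmem : ∀ k, b k ∈ D)
    (hbmin : ∀ k, ∀ c ∈ D, ⟪gradient F (x k), b k⟫ ≤ ⟪gradient F (x k), c⟫)
    (hiter : ∀ k : ℕ,
      x (k+1) = (1 - 2 / (k + 2 : ℝ)) • x k + (2 / (k + 2 : ℝ)) • b k) :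
    ∀ k : ℕ, 1 ≤ k →
      α / 2 * ‖x k - xhat‖ ^ 2 ≤ 2 * sSup (curvSet D F) / (k + 2) := by
  set C := sSup (curvSet D F) with hC
  have hxD : ∀ k, x k ∈ D := by
    intro k
    induction k with
    | zero => exact hx0
    | succ k ih =>
      rw [hiter]
      have hk : (0:ℝ) < k + 2 := by positivity
      refine hDconv ih (hbmem k) ?_ (by positivity) (by ring)
      rw [sub_nonneg, div_le_one hk]
      have : (0:ℝ) ≤ k := Nat.cast_nonneg k
      linarith
  have hC0 : 0 ≤ C := by
    apply le_csSup hbdd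
    exact ⟨xhat, hxhatD, xhat, hxhatD, 1, one_pos, le_rfl, by simp⟩
  have hstep : ∀ k : ℕ, F (x (k+1)) - F xhat ≤
      (1 - 2 / (k + 2 : ℝ)) * (F (x k) - F xhat) + (2 / (k + 2 : ℝ)) ^ 2 / 2 * C := by
    intro k
    have hk : (0:ℝ) ≤ k := Nat.cast_nonneg k
    have hγ1 : 2 / (k + 2 : ℝ) ≤ 1 := by
      rw [div_le_one (by positivity)]; linarith
    have hγ0 : 0 < 2 / (k + 2 : ℝ) := by positivity
    have hit := hiter k
    generalize 2 / (k + 2 : ℝ) = γ at *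
    have hx1 : x (k+1) = x k + γ • (b k - x k) := by
      rw [hit]; module
    have hc : 2 / γ ^ 2 * (F (x (k+1)) - F (x k) - ⟪gradient F (x k), γ • (b k - x k)⟫) ≤ C := by
      apply le_csSup hbdd
      exact ⟨x k, hxD k, b k, hbmem k, γ, hγ0, hγ1, by rw [hx1]⟩
    have hg := grad_ineq_aux F hFdiff hFconv (x k) xhat
    have hb := hbmin k xhat hxhatD
    rw [inner_sub_right] at hg
    rw [inner_smul_right, inner_sub_right, div_mul_eq_mul_div, div_le_iff₀ (by positivity)] at hc
    nlinarith
  have hrate : ∀ k : ℕ, F (x (k+1)) - F xhat ≤ 2 * C / (k + 3 : ℝ) := by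
    intro k
    induction k with
    | zero =>
      have := hstep 0
      norm_num at this ⊢
      linarith
    | succ k ih =>
      have h := hstep (k+1)
      push_cast at h ⊢
      have hk : (0:ℝ) ≤ k := Nat.cast_nonneg k
      have hγ1 : 0 ≤ 1 - 2 / (k + 1 + 2 : ℝ) := by
        rw [sub_nonneg, div_le_one (by positivity)]; linarith
      refine h.trans ((add_le_add_left (mul_le_mul_of_nonneg_left ih hγ1) _).trans ?_)
      have e : (1 - 2 / (k + 1 + 2 : ℝ)) * (2 * C / (k + 3)) + (2 / (k + 1 + 2 : ℝ)) ^ 2 / 2 * C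
          = 2 * C * (k + 2) / (k + 3) ^ 2 := by
        rw [show (k + 1 + 2 : ℝ) = k + 3 by ring]
        field_simp
        ring
      rw [e, div_le_div_iff₀ (by positivity) (by positivity)]
      nlinarith
  have hsc' : ∀ z ∈ D, α / 2 * ‖z - xhat‖ ^ 2 ≤ F z - F xhat := by
    intro z hz
    by_contra! hlt
    have hh := hxhatmin z hz
    set A := α / 2 * ‖z - xhat‖ ^ 2 with hA
    set h := F z - F xhat with hh'
    have hh0 : 0 ≤ h := by linarith
    have hA0 : 0 < A := by linarith
    have hl0 : 0 < (A - h) / (2 * A) := div_pos (by linarith) (by linarith)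
    have hl1 : (A - h) / (2 * A) ≤ 1 := by
      rw [div_le_one (by positivity)]; linarith
    have hlA : (A - h) / (2 * A) * A = (A - h) / 2 := by field_simp
    generalize (A - h) / (2 * A) = l at *
    have h1 := hsc z hz xhat hxhatD l hl0.le hl1
    have h2 := hxhatmin _ (hDconv hz hxhatD hl0.le (sub_nonneg.2 hl1) (by ring))
    have h3 : 0 ≤ l * (h - (1 - l) * A) := by
      rw [hA, hh']; linarith
    have h4 : 0 ≤ h - (1 - l) * A := nonneg_of_mul_nonneg_right h3 hl0
    linarith
  intro k hk
  obtain ⟨j, rfl⟩ := Nat.exists_eq_add_of_le' hk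
  refine (hsc' _ (hxD _)).trans ((hrate j).trans (le_of_eq ?_))
  push_cast
  ring
end

section
/- Let P be a transition kernel, z₀ : S → ℝ with z₀ ≥ 0, and C : {0,...,T} × S × A → ℝ a cost. Define the value functions V by backward value iteration: V(T,s) = min_{a} C(T,s,a), and V(t-1,s) = min_{a} ( C(t-1,s,a) + ∑_{s'} P(t,s',s,a) V(t,s') ) for t ∈ {1,...,T}. Then every x ∈ 𝒳(P, z₀) satisfies ∑_{t,s,a} C(t,s,a) x(t,s,a) ≥ ∑_{s} V(0,s) z₀(s). -/
open Finset

/-- With value functions V from backward value iteration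
(V(T,s) = min_a C(T,s,a); V(t−1,s) = min_a (C(t−1,s,a) + ∑_{s'} P(t,s',s,a) V(t,s'))),
every x ∈ 𝒳(P,z₀) satisfies ∑_{t,s,a} C(t,s,a) x(t,s,a) ≥ ∑_s V(0,s) z₀(s). -/
theorem stmt15 {S A : Type*} [Fintype S] [Fintype A] [Nonempty S] [Nonempty A] {T : ℕ}
    (P : Fin (T+1) → S → S → A → ℝ) (hP : IsKernel T P)
    (z0 : S → ℝ) (hz0 : ∀ s, 0 ≤ z0 s)
    (C : Fin (T+1) → S → A → ℝ) (V : Fin (T+1) → S → ℝ)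
    (hVT : ∀ s, V (Fin.last T) s
      = Finset.univ.inf' Finset.univ_nonempty (fun a => C (Fin.last T) s a))
    (hVt : ∀ (t : ℕ) (ht : t < T), ∀ s,
      V ⟨t, by omega⟩ s = Finset.univ.inf' Finset.univ_nonempty (fun a =>
        C ⟨t, by omega⟩ s a
          + ∑ s', P ⟨t+1, by omega⟩ s' s a * V ⟨t+1, by omega⟩ s')) :
    ∀ x ∈ Feas T P z0,
      ∑ s, V 0 s * z0 s ≤ ∑ t, ∑ s, ∑ a, C t s a * x t s a := by
  rintro x ⟨hx, hx0, hxt⟩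
  let W : Fin (T+1) → ℝ := fun t => ∑ s, ∑ a, V t s * x t s a
  let K : Fin (T+1) → ℝ := fun t => ∑ s, ∑ a, C t s a * x t s a
  have hlast : W (Fin.last T) ≤ K (Fin.last T) := by
    refine Finset.sum_le_sum fun s _ => Finset.sum_le_sum fun a _ => ?_
    refine mul_le_mul_of_nonneg_right ?_ (hx _ _ _)
    rw [hVT]
    exact Finset.inf'_le (fun a => C (Fin.last T) s a) (Finset.mem_univ a)
  have hstep : ∀ i : Fin T, W i.castSucc ≤ K i.castSucc + W i.succ := by
    rintro ⟨t, ht⟩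
    have h1 : W (Fin.succ ⟨t, ht⟩) = ∑ s, ∑ a,
        (∑ s', P ⟨t+1, by omega⟩ s' s a * V ⟨t+1, by omega⟩ s') * x ⟨t, by omega⟩ s a := by
      change ∑ s', ∑ a, V ⟨t+1, by omega⟩ s' * x ⟨t+1, by omega⟩ s' a = _
      simp_rw [← Finset.mul_sum, ← hxt t ht, Finset.mul_sum, Finset.sum_mul]
      rw [Finset.sum_comm]
      refine Finset.sum_congr rfl fun s _ => ?_
      rw [Finset.sum_comm]
      refine Finset.sum_congr rfl fun a _ => Finset.sum_congr rfl fun s' _ => ?_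
      ring
    rw [h1]
    change _ ≤ ∑ s, ∑ a, C ⟨t, by omega⟩ s a * x ⟨t, by omega⟩ s a + _
    simp_rw [← Finset.sum_add_distrib, ← add_mul]
    refine Finset.sum_le_sum fun s _ => Finset.sum_le_sum fun a _ => ?_
    refine mul_le_mul_of_nonneg_right ?_ (hx _ _ _)
    refine (hVt t ht s).trans_le ?_
    exact Finset.inf'_le (fun a => C ⟨t, by omega⟩ s a
          + ∑ s', P ⟨t+1, by omega⟩ s' s a * V ⟨t+1, by omega⟩ s') (Finset.mem_univ a)
  have h0 : ∑ s, V 0 s * z0 s = W 0 := by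
    refine Finset.sum_congr rfl fun s _ => ?_
    rw [← hx0, Finset.mul_sum]
  have hsum := Finset.sum_le_sum fun i (_ : i ∈ (Finset.univ : Finset (Fin T))) => hstep i
  rw [Finset.sum_add_distrib] at hsum
  have e1 := Fin.sum_univ_castSucc W
  have e2 := Fin.sum_univ_succ W
  have e3 := Fin.sum_univ_castSucc K
  rw [h0]
  change W 0 ≤ ∑ t, K t
  linarith
end

section
/- Let P be a transition kernel, z₀ : S → ℝ with z₀ ≥ 0, and C : {0,...,T} × S × A → ℝ a cost, with value functions V defined by backward value iteration: V(T,s) = min_{a} C(T,s,a) and V(t-1,s) = min_{a} ( C(t-1,s,a) + ∑_{s'} P(t,s',s,a) V(t,s') ) for t ∈ {1,...,T}. Let π : {0,...,T} × S → A be any greedy policy, i.e., π(T,s) ∈ argmin_{a} C(T,s,a) and π(t-1,s) ∈ argmin_{a} ( C(t-1,s,a) + ∑_{s'} P(t,s',s,a) V(t,s') ), and let d be the distribution induced by π: d(0,s,a) = z₀(s) if a = π(0,s) and 0 otherwise; d(t,s,a) = ∑_{s',a'} P(t,s,s',a') d(t-1,s',a') if a = π(t,s) and 0 otherwise. Then ∑_{t,s,a}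 C(t,s,a) d(t,s,a) = ∑_{s} V(0,s) z₀(s); in particular d minimizes x ↦ ∑_{t,s,a} C(t,s,a) x(t,s,a) over 𝒳(P, z₀). -/
open Finset

/-- Performance-difference identity: the cost of a feasible `x` is `∑ V₀ z₀` plus the
expected advantages. -/
theorem cost_identity {S A : Type*} [Fintype S] [Fintype A] {T : ℕ}
    (P : Fin (T+1) → S → S → A → ℝ) (z0 : S → ℝ)
    (C : Fin (T+1) → S → A → ℝ) (V : Fin (T+1) → S → ℝ)
    (R : Fin (T+1) → S → A → ℝ)
    (hRl : ∀ s a, R (Fin.last T) s a = C (Fin.last T) s a - V (Fin.last T) s)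
    (hRc : ∀ (i : Fin T) s a, R i.castSucc s a =
      C i.castSucc s a + ∑ s', P i.succ s' s a * V i.succ s' - V i.castSucc s)
    (x : Fin (T+1) → S → A → ℝ) (hx : x ∈ Feas T P z0) :
    ∑ t, ∑ s, ∑ a, C t s a * x t s a
      = ∑ s, V 0 s * z0 s + ∑ t, ∑ s, ∑ a, R t s a * x t s a := by
  obtain ⟨-, h0, hf⟩ := hx
  have hf' : ∀ (i : Fin T) s, ∑ s', ∑ a, P i.succ s s' a * x i.castSucc s' a
      = ∑ a, x i.succ s a := fun i s => hf i.1 i.2 s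
  let m : Fin (T+1) → ℝ := fun t => ∑ s, V t s * ∑ a, x t s a
  have hm0 : m 0 = ∑ s, V 0 s * z0 s := by simp only [m, h0]
  have hlast : ∑ s, ∑ a, C (Fin.last T) s a * x (Fin.last T) s a
      = ∑ s, ∑ a, R (Fin.last T) s a * x (Fin.last T) s a + m (Fin.last T) := by
    simp only [m, hRl, Finset.mul_sum, ← Finset.sum_add_distrib]
    refine Finset.sum_congr rfl fun s _ => Finset.sum_congr rfl fun a _ => ?_
    ring
  have hstep : ∀ i : Fin T, ∑ s, ∑ a, C i.castSucc s a * x i.castSucc s a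
      = ∑ s, ∑ a, R i.castSucc s a * x i.castSucc s a + m i.castSucc - m i.succ := by
    intro i
    have h1 : m i.succ = ∑ s, ∑ a, (∑ s', P i.succ s' s a * V i.succ s') * x i.castSucc s a := by
      simp only [m, ← hf']
      simp only [Finset.mul_sum, Finset.sum_mul]
      rw [Finset.sum_comm]
      refine Finset.sum_congr rfl fun s _ => ?_
      rw [Finset.sum_comm]
      refine Finset.sum_congr rfl fun a _ => Finset.sum_congr rfl fun s' _ => ?_
      ring
    rw [h1]
    simp only [m, hRc, Finset.mul_sum, ← Finset.sum_add_distrib, ← Finset.sum_sub_distrib]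
    refine Finset.sum_congr rfl fun s _ => Finset.sum_congr rfl fun a _ => ?_
    ring
  have htel : ∑ i : Fin T, m i.castSucc + m (Fin.last T) = m 0 + ∑ i : Fin T, m i.succ := by
    rw [← Fin.sum_univ_castSucc, Fin.sum_univ_succ]
  rw [Fin.sum_univ_castSucc, hlast, Finset.sum_congr rfl fun i _ => hstep i,
    Finset.sum_sub_distrib, Finset.sum_add_distrib, ← hm0,
    Fin.sum_univ_castSucc (fun t => ∑ s, ∑ a, R t s a * x t s a)]
  linarith

/-- With value functions V from backward value iteration, a greedy policy π,
and d the state-action distribution induced by π, we have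
∑_{t,s,a} C(t,s,a) d(t,s,a) = ∑_s V(0,s) z₀(s); in particular d minimizes the linear cost
x ↦ ∑_{t,s,a} C(t,s,a) x(t,s,a) over 𝒳(P,z₀). -/
theorem stmt16 {S A : Type*} [Fintype S] [Fintype A] [Nonempty S] [Nonempty A]
    [DecidableEq A] {T : ℕ}
    (P : Fin (T+1) → S → S → A → ℝ) (hP : IsKernel T P)
    (z0 : S → ℝ) (hz0 : ∀ s, 0 ≤ z0 s)
    (C : Fin (T+1) → S → A → ℝ) (V : Fin (T+1) → S → ℝ)
    (hVT : ∀ s, V (Fin.last T) s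
      = Finset.univ.inf' Finset.univ_nonempty (fun a => C (Fin.last T) s a))
    (hVt : ∀ (t : ℕ) (ht : t < T), ∀ s,
      V ⟨t, by omega⟩ s = Finset.univ.inf' Finset.univ_nonempty (fun a =>
        C ⟨t, by omega⟩ s a
          + ∑ s', P ⟨t+1, by omega⟩ s' s a * V ⟨t+1, by omega⟩ s'))
    (π : Fin (T+1) → S → A)
    (hπT : ∀ s a, C (Fin.last T) s (π (Fin.last T) s) ≤ C (Fin.last T) s a)
    (hπt : ∀ (t : ℕ) (ht : t < T), ∀ s a,
      C ⟨t, by omega⟩ s (π ⟨t, by omega⟩ s)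
          + ∑ s', P ⟨t+1, by omega⟩ s' s (π ⟨t, by omega⟩ s) * V ⟨t+1, by omega⟩ s'
        ≤ C ⟨t, by omega⟩ s a
          + ∑ s', P ⟨t+1, by omega⟩ s' s a * V ⟨t+1, by omega⟩ s')
    (d : Fin (T+1) → S → A → ℝ)
    (hd0 : ∀ s a, d 0 s a = if a = π 0 s then z0 s else 0)
    (hdt : ∀ (t : ℕ) (ht : t < T), ∀ s a,
      d ⟨t+1, by omega⟩ s a =
        if a = π ⟨t+1, by omega⟩ s then
          ∑ s', ∑ a', P ⟨t+1, by omega⟩ s s' a' * d ⟨t, by omega⟩ s' a'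
        else 0) :
    (∑ t, ∑ s, ∑ a, C t s a * d t s a = ∑ s, V 0 s * z0 s) ∧
    d ∈ Feas T P z0 ∧
    ∀ x ∈ Feas T P z0,
      ∑ t, ∑ s, ∑ a, C t s a * d t s a ≤ ∑ t, ∑ s, ∑ a, C t s a * x t s a := by
  classical
  have hdt' : ∀ (i : Fin T) s a, d i.succ s a = if a = π i.succ s then
      ∑ s', ∑ a', P i.succ s s' a' * d i.castSucc s' a' else 0 := fun i => hdt i.1 i.2
  have hVt' : ∀ (i : Fin T) s, V i.castSucc s = Finset.univ.inf' Finset.univ_nonempty (fun a =>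
        C i.castSucc s a + ∑ s', P i.succ s' s a * V i.succ s') := fun i => hVt i.1 i.2
  have hπt' : ∀ (i : Fin T) s a, C i.castSucc s (π i.castSucc s)
          + ∑ s', P i.succ s' s (π i.castSucc s) * V i.succ s'
        ≤ C i.castSucc s a + ∑ s', P i.succ s' s a * V i.succ s' := fun i => hπt i.1 i.2
  have hoff : ∀ t s a, a ≠ π t s → d t s a = 0 := by
    intro t
    refine Fin.cases ?_ (fun i => ?_) t
    · intro s a h
      rw [hd0, if_neg h]
    · intro s a h
      rw [hdt', if_neg h]
  have hdnn : ∀ t s a, 0 ≤ d t s a := by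
    intro t
    induction t using Fin.induction with
    | zero =>
      intro s a
      rw [hd0]
      split_ifs
      · exact hz0 s
      · exact le_rfl
    | succ i ih =>
      intro s a
      rw [hdt']
      split_ifs
      · exact Finset.sum_nonneg fun s' _ => Finset.sum_nonneg fun a' _ =>
          mul_nonneg (hP.1 _ _ _ _) (ih s' a')
      · exact le_rfl
  have hdF : d ∈ Feas T P z0 := by
    refine ⟨hdnn, ?_, ?_⟩
    · intro s
      simp [hd0]
    · intro t ht s
      simp [hdt t ht]
  let R : Fin (T+1) → S → A → ℝ := fun t => Fin.lastCases
    (motive := fun _ => S → A → ℝ) (fun s a => C (Fin.last T) s a - V (Fin.last T) s)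
    (fun i s a => C i.castSucc s a + ∑ s', P i.succ s' s a * V i.succ s' - V i.castSucc s) t
  have hRl : ∀ s a, R (Fin.last T) s a = C (Fin.last T) s a - V (Fin.last T) s := by
    intro s a
    simp only [R, Fin.lastCases_last]
  have hRc : ∀ (i : Fin T) s a, R i.castSucc s a =
      C i.castSucc s a + ∑ s', P i.succ s' s a * V i.succ s' - V i.castSucc s := by
    intro i s a
    simp only [R, Fin.lastCases_castSucc]
  have hRnn : ∀ t s a, 0 ≤ R t s a := by
    intro t
    refine Fin.lastCases ?_ (fun i => ?_) t
    · intro s a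
      rw [hRl, hVT, sub_nonneg]
      exact Finset.inf'_le _ (Finset.mem_univ a)
    · intro s a
      rw [hRc, hVt', sub_nonneg]
      exact Finset.inf'_le (fun a => C i.castSucc s a + ∑ s', P i.succ s' s a * V i.succ s')
        (Finset.mem_univ a)
  have hRπ : ∀ t s, R t s (π t s) ≤ 0 := by
    intro t
    refine Fin.lastCases ?_ (fun i => ?_) t
    · intro s
      rw [hRl, hVT, sub_nonpos]
      exact Finset.le_inf' _ _ fun a _ => hπT s a
    · intro s
      rw [hRc, hVt', sub_nonpos]
      exact Finset.le_inf' _ _ fun a _ => hπt' i s a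
  have hRd : ∑ t, ∑ s, ∑ a, R t s a * d t s a = 0 := by
    refine Finset.sum_eq_zero fun t _ => Finset.sum_eq_zero fun s _ =>
      Finset.sum_eq_zero fun a _ => ?_
    by_cases h : a = π t s
    · rw [h, le_antisymm (hRπ t s) (hRnn _ _ _), zero_mul]
    · rw [hoff t s a h, mul_zero]
  have hd := cost_identity P z0 C V R hRl hRc d hdF
  rw [hRd, add_zero] at hd
  refine ⟨hd, hdF, fun x hx => ?_⟩
  rw [hd, cost_identity P z0 C V R hRl hRc x hx]
  have : 0 ≤ ∑ t, ∑ s, ∑ a, R t s a * x t s a :=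
    Finset.sum_nonneg fun t _ => Finset.sum_nonneg fun s _ => Finset.sum_nonneg fun a _ =>
      mul_nonneg (hRnn t s a) (hx.1 t s a)
  linarith
end

section
/- Let the player costs have the congestion form ℓ^i(t,s,a)(x) = α_i · f_{t,s}(∑_{a'} y(t,s,a')) + α_i · g_{t,s,a}(y(t,s,a)) + h^i_{t,s,a}(x^i(t,s,a)), where y = ∑_{j=1}^N α_j x^j with α_j > 0, and each f_{t,s}, g_{t,s,a}, h^i_{t,s,a} : ℝ → ℝ is continuous. Define F(x) = ∑_{t,s} ∫_0^{∑_{a'} y(t,s,a')} f_{t,s}(u) du + ∑_{t,s,a} ∫_0^{y(t,s,a)} g_{t,s,a}(u) du + ∑_{i,t,s,a} ∫_0^{x^i(t,s,a)} h^i_{t,s,a}(u) du. Then F is differentiable on ℝ^{N(T+1)|S||A|} and ∂F/∂x^i(t,s,a)(x) = ℓ^i(t,s,a)(x) for every x and every index (i,t,s,a), i.e., F is a potential function for these costs. -/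
open Finset

/-- Coordinate functional on the joint space. -/
noncomputable def coordL {S A : Type*} [Fintype S] [Fintype A] {T N : ℕ}
    (j : Fin N) (t : Fin (T+1)) (s : S) (a : A) :
    (Fin N → Fin (T+1) → S → A → ℝ) →L[ℝ] ℝ :=
  (ContinuousLinearMap.proj (R := ℝ) (φ := fun _ : A => ℝ) a).comp
    ((ContinuousLinearMap.proj (R := ℝ) (φ := fun _ : S => A → ℝ) s).comp
      ((ContinuousLinearMap.proj (R := ℝ) (φ := fun _ : Fin (T+1) => S → A → ℝ) t).comp
        (ContinuousLinearMap.proj (R := ℝ) (φ := fun _ : Fin N => Fin (T+1) → S → A → ℝ) j)))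

theorem coordL_apply {S A : Type*} [Fintype S] [Fintype A] {T N : ℕ}
    (j : Fin N) (t : Fin (T+1)) (s : S) (a : A) (x : Fin N → Fin (T+1) → S → A → ℝ) :
    coordL j t s a x = x j t s a := rfl

theorem hasFDerivAt_integral_clm {E : Type*} [NormedAddCommGroup E] [NormedSpace ℝ E]
    (φ : ℝ → ℝ) (hφ : Continuous φ) (L : E →L[ℝ] ℝ) (G : E → ℝ) (hG : ∀ x, G x = L x) (x : E) :
    HasFDerivAt (fun z => ∫ u in (0:ℝ)..(G z), φ u) (φ (G x) • L) x := by
  obtain rfl : G = L := funext hG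
  have h1 : HasDerivAt (fun w => ∫ u in (0:ℝ)..w, φ u) (φ (L x)) (L x) :=
    hφ.integral_hasStrictDerivAt 0 (L x) |>.hasDerivAt
  exact h1.comp_hasFDerivAt x L.hasFDerivAt

set_option maxHeartbeats 2000000 in
/-- For congestion-form player costs with continuous f, g, h, the function
F(x) = ∑_{t,s} ∫₀^{∑_{a'} y(t,s,a')} f_{t,s} + ∑_{t,s,a} ∫₀^{y(t,s,a)} g_{t,s,a}
+ ∑_{i,t,s,a} ∫₀^{xⁱ(t,s,a)} hⁱ_{t,s,a} is differentiable and is a potential function: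
∂F/∂xⁱ(t,s,a)(x) = ℓⁱ(t,s,a)(x) for all x and all (i,t,s,a). -/
theorem stmt17 {S A : Type*} [Fintype S] [Fintype A] [Nonempty S] [Nonempty A]
    [DecidableEq S] [DecidableEq A] {T N : ℕ}
    (α : Fin N → ℝ) (hα : ∀ j, 0 < α j)
    (f : Fin (T+1) → S → ℝ → ℝ) (g : Fin (T+1) → S → A → ℝ → ℝ)
    (h : Fin N → Fin (T+1) → S → A → ℝ → ℝ)
    (hf : ∀ t s, Continuous (f t s)) (hg : ∀ t s a, Continuous (g t s a))
    (hh : ∀ i t s a, Continuous (h i t s a))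
    (ℓ : Fin N → Fin (T+1) → S → A → (Fin N → Fin (T+1) → S → A → ℝ) → ℝ)
    (hℓ : ∀ i t s a x, ℓ i t s a x =
      α i * f t s (∑ a', ∑ j, α j * x j t s a')
        + α i * g t s a (∑ j, α j * x j t s a)
        + h i t s a (x i t s a))
    (F : (Fin N → Fin (T+1) → S → A → ℝ) → ℝ)
    (hF : ∀ x, F x =
      (∑ t, ∑ s, ∫ u in (0:ℝ)..(∑ a', ∑ j, α j * x j t s a'), f t s u)
        + (∑ t, ∑ s, ∑ a, ∫ u in (0:ℝ)..(∑ j, α j * x j t s a), g t s a u)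
        + ∑ i, ∑ t, ∑ s, ∑ a, ∫ u in (0:ℝ)..(x i t s a), h i t s a u) :
    ∀ x : Fin N → Fin (T+1) → S → A → ℝ,
      DifferentiableAt ℝ F x ∧
      ∀ i t s a, fderiv ℝ F x (ebN N T i t s a) = ℓ i t s a x := by
  intro x
  have key : HasFDerivAt F
      ((∑ t, ∑ s, f t s (∑ a', ∑ j, α j * x j t s a') • ∑ a', ∑ j, α j • coordL j t s a')
        + (∑ t, ∑ s, ∑ a, g t s a (∑ j, α j * x j t s a) • ∑ j, α j • coordL j t s a)
        + ∑ i, ∑ t, ∑ s, ∑ a, h i t s a (x i t s a) • coordL i t s a) x := by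
    rw [funext hF]
    refine HasFDerivAt.add (HasFDerivAt.add ?_ ?_) ?_
    · refine HasFDerivAt.fun_sum fun t _ => HasFDerivAt.fun_sum fun s _ => ?_
      refine hasFDerivAt_integral_clm (f t s) (hf t s) _
        (fun x => ∑ a', ∑ j, α j * x j t s a') (fun z => ?_) x
      simp [coordL_apply]
    · refine HasFDerivAt.fun_sum fun t _ => HasFDerivAt.fun_sum fun s _ =>
        HasFDerivAt.fun_sum fun a _ => ?_
      refine hasFDerivAt_integral_clm (g t s a) (hg t s a) _
        (fun x => ∑ j, α j * x j t s a) (fun z => ?_) x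
      simp [coordL_apply]
    · refine HasFDerivAt.fun_sum fun i _ => HasFDerivAt.fun_sum fun t _ =>
        HasFDerivAt.fun_sum fun s _ => HasFDerivAt.fun_sum fun a _ => ?_
      exact hasFDerivAt_integral_clm (h i t s a) (hh i t s a) (coordL i t s a)
        (fun x => x i t s a) (fun z => rfl) x
  refine ⟨key.differentiableAt, fun i t s a => ?_⟩
  have e : ∀ j t' s' a', ebN N T i t s a j t' s' a' =
      if j = i then if t' = t then if s' = s then if a' = a then (1:ℝ) else 0 else 0 else 0
        else 0 := by
    intro j t' s' a'
    unfold ebN eb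
    split_ifs <;> simp_all
  rw [key.fderiv, hℓ]
  simp [coordL_apply, e, Finset.sum_ite_irrel]
  ring
end
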